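/- Fix an integer N ≥ 2, t ∈ [0,1], n ≥ 1, an integer i ≥ N and θ ∈ [0,1). Then ρ^t_N({y : a_{n+1}(y) = i and s^t_{N,n}(y) < θ}) = ∫_{[0,θ)} P_{N,i}(s) dμ^t_{N,n}(s), where μ^t_{N,n} is the pushforward of ρ^t_N under the map y ↦ s^t_{N,n}(y) and P_{N,i}(s) = (s+N−1)/((s+i)(s+i−1)). Equivalently, G^t_{N,n+1}(1 − N/(i+θ)) − G^t_{N,n+1}(1 − N/i) = ∫_{[0,θ)} P_{N,i}(s) dμ^t_{N,n}(s). -/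

import Mathlib

open MeasureTheory Set Real Filter

/-- The Rényi-type continued fraction map `R_N`. -/
noncomputable def RN (N : ℕ) (x : ℝ) : ℝ :=
  if x = 1 then 0 else (N : ℝ) / (1 - x) - ⌊(N : ℝ) / (1 - x)⌋

/-- `digit N k x` is the `(k+1)`-st digit `a_{k+1}(x)`. -/
noncomputable def digit (N k : ℕ) (x : ℝ) : ℤ :=
  ⌊(N : ℝ) / (1 - (RN N)^[k] x)⌋

/-- The conditional probability measure `ρ^t_N`, with density
`N(N-1+t)/[N-(1-x)(1-t)]²` on `[0,1]`. -/
noncomputable def rhoT (N : ℕ) (t : ℝ) : Measure ℝ :=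
  (volume.restrict (Set.Icc (0 : ℝ) 1)).withDensity fun x =>
    ENNReal.ofReal ((N : ℝ) * ((N : ℝ) - 1 + t) / ((N : ℝ) - (1 - x) * (1 - t)) ^ 2)

/-- `s^t_{N,k}(y)` built from the digits of `y`. -/
noncomputable def sVar (N : ℕ) (t y : ℝ) : ℕ → ℝ
  | 0 => t
  | k + 1 => 1 - (N : ℝ) / ((digit N k y : ℝ) + sVar N t y k)

/-- `G^t_{N,n}(s)`. -/
noncomputable def Gt (N : ℕ) (t : ℝ) : ℕ → ℝ → ℝ
  | 0 => fun s => if s ≤ t then 0 else 1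
  | n + 1 => fun s => (rhoT N t {y | sVar N t y (n + 1) < s}).toReal

/-- first digit -/
noncomputable def AA (N : ℕ) (x : ℝ) : ℤ := ⌊(N : ℝ) / (1 - x)⌋

noncomputable def dd (N : ℕ) (t x : ℝ) : ENNReal :=
  ENNReal.ofReal ((N : ℝ) * ((N : ℝ) - 1 + t) / ((N : ℝ) - (1 - x) * (1 - t)) ^ 2)

lemma AA_meas (N : ℕ) : Measurable (AA N) := by
  unfold AA
  exact Int.measurable_floor.comp (by fun_prop)

lemma RN_meas (N : ℕ) : Measurable (RN N) := by
  unfold RN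
  refine Measurable.ite (measurableSet_singleton _) measurable_const ?_
  have h : Measurable fun x : ℝ => ((⌊(N : ℝ) / (1 - x)⌋ : ℤ) : ℝ) :=
    (measurable_from_top (f := fun z : ℤ => (z : ℝ))).comp (AA_meas N)
  exact Measurable.sub (by fun_prop) h

lemma dd_meas2 (N : ℕ) : Measurable (fun p : ℝ × ℝ => dd N p.1 p.2) := by
  unfold dd; fun_prop

lemma dd_meas (N : ℕ) (t : ℝ) : Measurable (dd N t) := by
  unfold dd; fun_prop

lemma rho_eq (N : ℕ) (t : ℝ) :
    rhoT N t = (volume.restrict (Set.Ico (0 : ℝ) 1)).withDensity (dd N t) := by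
  unfold rhoT
  rw [Measure.restrict_congr_set (Ico_ae_eq_Icc (a := (0:ℝ)) (b := 1))]
  rfl

lemma lint_rho (N : ℕ) (t : ℝ) (g : ℝ → ENNReal) (hg : Measurable g) :
    ∫⁻ x, g x ∂(rhoT N t) = ∫⁻ x in Set.Ico (0 : ℝ) 1, dd N t x * g x := by
  rw [rho_eq, lintegral_withDensity_eq_lintegral_mul _ (dd_meas N t) hg]
  rfl

lemma slint_rho (N : ℕ) (t : ℝ) (g : ℝ → ENNReal) (hg : Measurable g) (B : Set ℝ)
    (hB : MeasurableSet B) :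
    ∫⁻ x in B, g x ∂(rhoT N t) = ∫⁻ x in B ∩ Set.Ico (0 : ℝ) 1, dd N t x * g x := by
  rw [rho_eq, setLIntegral_withDensity_eq_setLIntegral_mul _ (dd_meas N t) hg hB,
    Measure.restrict_restrict hB]
  rfl

lemma rho_ae (N : ℕ) (t : ℝ) : ∀ᵐ y ∂(rhoT N t), y ∈ Set.Ico (0 : ℝ) 1 := by
  rw [rho_eq]
  exact (withDensity_absolutelyContinuous _ _).ae_le (ae_restrict_mem measurableSet_Ico)

lemma den_pos (N : ℕ) (hN : 2 ≤ N) (t x : ℝ) (ht : t ∈ Set.Icc (0 : ℝ) 1)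
    (hx : x ∈ Set.Icc (0 : ℝ) 1) : 0 < (N : ℝ) - (1 - x) * (1 - t) := by
  have : (2 : ℝ) ≤ N := by exact_mod_cast hN
  obtain ⟨a, b⟩ := ht
  obtain ⟨c, d⟩ := hx
  nlinarith [mul_nonneg c (sub_nonneg.2 b)]

lemma rho_univ (N : ℕ) (hN : 2 ≤ N) (t : ℝ) (ht : t ∈ Set.Icc (0 : ℝ) 1) :
    rhoT N t Set.univ = 1 := by
  have hN' : (2 : ℝ) ≤ N := by exact_mod_cast hN
  have hc : ContinuousOn (fun x : ℝ => (N : ℝ) * ((N : ℝ) - 1 + t) /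
      ((N : ℝ) - (1 - x) * (1 - t)) ^ 2) (Set.Icc 0 1) := by
    refine ContinuousOn.div (by fun_prop) (by fun_prop) ?_
    intro x hx
    exact pow_ne_zero _ (den_pos N hN t x ht hx).ne'
  have hint : IntervalIntegrable (fun x : ℝ => (N : ℝ) * ((N : ℝ) - 1 + t) /
      ((N : ℝ) - (1 - x) * (1 - t)) ^ 2) volume 0 1 := by
    apply ContinuousOn.intervalIntegrable
    rwa [Set.uIcc_of_le zero_le_one]
  have hI : ∫ x in (0:ℝ)..1, ((N : ℝ) * ((N : ℝ) - 1 + t) /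
      ((N : ℝ) - (1 - x) * (1 - t)) ^ 2) = 1 := by
    have := intervalIntegral.integral_eq_sub_of_hasDerivAt (a := 0) (b := 1)
      (f := fun x : ℝ => (N : ℝ) * x / ((N : ℝ) - (1 - x) * (1 - t)))
      (f' := fun x : ℝ => (N : ℝ) * ((N : ℝ) - 1 + t) / ((N : ℝ) - (1 - x) * (1 - t)) ^ 2)
      ?_ hint
    · rw [this]
      have : (N : ℝ) ≠ 0 := by linarith
      simp [this]
    · intro x hx
      rw [Set.uIcc_of_le zero_le_one] at hx
      have hp := den_pos N hN t x ht hx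
      have h1 : HasDerivAt (fun x : ℝ => (N : ℝ) * x) ((N : ℝ) * 1) x :=
        (hasDerivAt_id x).const_mul _
      have h2 : HasDerivAt (fun x : ℝ => (N : ℝ) - (1 - x) * (1 - t)) (-((-1) * (1 - t))) x :=
        (((hasDerivAt_id x).const_sub 1).mul_const (1 - t)).const_sub _
      have h3 := h1.div h2 hp.ne'
      have e : (N : ℝ) * ((N : ℝ) - 1 + t) / ((N : ℝ) - (1 - x) * (1 - t)) ^ 2 =
          ((N : ℝ) * 1 * (N - (1 - x) * (1 - t)) - N * x * (-((-1) * (1 - t)))) /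
            (N - (1 - x) * (1 - t)) ^ 2 := by
        congr 1
        ring
      rw [e]
      exact h3
  have : rhoT N t Set.univ = ∫⁻ x in Set.Icc (0:ℝ) 1, ENNReal.ofReal ((N : ℝ) * ((N : ℝ) - 1 + t) /
      ((N : ℝ) - (1 - x) * (1 - t)) ^ 2) := by
    unfold rhoT
    rw [withDensity_apply _ MeasurableSet.univ, Measure.restrict_univ]
  rw [this, ← ofReal_integral_eq_lintegral_ofReal]
  · rw [integral_Icc_eq_integral_Ioc, ← intervalIntegral.integral_of_le zero_le_one, hI]
    simp
  · exact hc.integrableOn_Icc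
  · refine Filter.Eventually.of_forall fun x => ?_
    have := ht.1
    exact div_nonneg (mul_nonneg (by linarith) (by linarith)) (sq_nonneg _)

lemma img (N : ℕ) (hN : 2 ≤ N) (i : ℤ) (hi : (N : ℤ) ≤ i) :
    (AA N ⁻¹' {i}) ∩ Set.Ico (0 : ℝ) 1 = (fun z : ℝ => 1 - (N : ℝ) / (i + z)) '' Set.Ico 0 1 := by
  have hN' : (2 : ℝ) ≤ N := by exact_mod_cast hN
  have hi' : (N : ℝ) ≤ i := by exact_mod_cast hi
  ext x
  simp only [Set.mem_inter_iff, Set.mem_preimage, Set.mem_singleton_iff, Set.mem_image,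
    Set.mem_Ico, AA, Int.floor_eq_iff]
  constructor
  · rintro ⟨⟨h1, h2⟩, h3, h4⟩
    refine ⟨N / (1 - x) - i, ⟨by linarith, by linarith⟩, ?_⟩
    have : 1 - x ≠ 0 := by linarith
    have : (N : ℝ) ≠ 0 := by linarith
    rw [add_sub_cancel]
    field_simp
    ring
  · rintro ⟨z, ⟨h1, h2⟩, rfl⟩
    have h0 : (0 : ℝ) < i + z := by linarith
    have : (N : ℝ) ≠ 0 := by linarith
    have e : (N : ℝ) / (1 - (1 - N / (i + z))) = i + z := by
      rw [sub_sub_cancel, div_div_cancel₀ this]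
    rw [e]
    refine ⟨⟨by linarith, by linarith⟩, ?_, ?_⟩
    · rw [sub_nonneg, div_le_one h0]; linarith
    · have : 0 < (N : ℝ) / (i + z) := by positivity
      linarith

lemma AA_ge (N : ℕ) (x : ℝ) (hx : x ∈ Set.Ico (0 : ℝ) 1) : (N : ℤ) ≤ AA N x := by
  unfold AA
  rw [Int.le_floor]
  have : 0 < 1 - x := by linarith [hx.2]
  rw [le_div_iff₀ this]
  push_cast
  have : (0 : ℝ) ≤ N := by positivity
  nlinarith [hx.1]

lemma s_mem (N : ℕ) (hN : 2 ≤ N) (a : ℝ) (ha : (N : ℝ) ≤ a) (s : ℝ) (hs : s ∈ Set.Icc (0 : ℝ) 1) :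
    1 - (N : ℝ) / (a + s) ∈ Set.Ico (0 : ℝ) 1 := by
  have hN' : (2 : ℝ) ≤ N := by exact_mod_cast hN
  have := hs.1
  have h0 : 0 < a + s := by linarith
  constructor
  · rw [sub_nonneg, div_le_one h0]; linarith
  · have : 0 < (N : ℝ) / (a + s) := by positivity
    linarith

lemma key (N : ℕ) (hN : 2 ≤ N) (s : ℝ) (hs : s ∈ Set.Icc (0 : ℝ) 1) (i : ℤ) (hi : (N : ℤ) ≤ i)
    (g : ℝ → ENNReal) (hg : Measurable g) :
    ∫⁻ x in AA N ⁻¹' {i}, g (RN N x) ∂(rhoT N s) =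
      ENNReal.ofReal ((s + (N : ℝ) - 1) / ((s + (i : ℝ)) * (s + (i : ℝ) - 1))) *
        ∫⁻ z, g z ∂(rhoT N (1 - N / (i + s))) := by
  have hN' : (2 : ℝ) ≤ N := by exact_mod_cast hN
  have hi' : (N : ℝ) ≤ i := by exact_mod_cast hi
  rw [slint_rho N s (fun x => g (RN N x)) (hg.comp (RN_meas N)) _ (AA_meas N (measurableSet_singleton i)), img N hN i hi,
    lint_rho N _ g hg, ← lintegral_const_mul (f := fun x => dd N (1 - N / (i + s)) x * g x) _
      ((dd_meas N _).mul hg),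
    lintegral_image_eq_lintegral_abs_deriv_mul measurableSet_Ico
      (f' := fun z => (N : ℝ) / (i + z) ^ 2)]
  · refine setLIntegral_congr_fun measurableSet_Ico ?_
    rintro z ⟨hz0, hz1⟩
    obtain ⟨hs0, hs1⟩ := hs
    have h0 : (0 : ℝ) < i + z := by linarith
    have hNN : (N : ℝ) ≠ 0 := by linarith
    have hR : RN N (1 - N / (i + z)) = z := by
      unfold RN
      rw [if_neg]
      · rw [sub_sub_cancel, div_div_cancel₀ hNN]
        have : ⌊(i : ℝ) + z⌋ = i := by
          rw [Int.floor_eq_iff]; constructor <;> linarith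
        rw [this]; ring
      · have : 0 < (N : ℝ) / (i + z) := by positivity
        linarith
    simp only [hR]
    rw [← mul_assoc, ← mul_assoc]
    congr 1
    unfold dd
    have hz' : (0:ℝ) < i + z - 1 + s := by linarith
    have hq : (0:ℝ) < s + i := by linarith
    have hq1 : (0:ℝ) < s + i - 1 := by linarith
    rw [← ENNReal.ofReal_mul (abs_nonneg _), ← ENNReal.ofReal_mul, abs_of_nonneg]
    · congr 1
      have e1 : (N : ℝ) - (1 - (1 - N / (i + z))) * (1 - s) = N * (i + z - 1 + s) / (i + z) := by
        field_simp; ring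
      have e2 : (N : ℝ) - (1 - z) * (1 - (1 - N / (i + s))) = N * (i + z - 1 + s) / (s + i) := by
        rw [add_comm (i : ℝ) s]; field_simp; ring
      have e3 : (N : ℝ) - 1 + (1 - N / (i + s)) = N * (s + i - 1) / (s + i) := by
        rw [add_comm (i : ℝ) s]; field_simp; ring
      rw [e1, e2, e3]
      field_simp
      ring
    · positivity
    · apply div_nonneg <;> [linarith; positivity]
  · rintro z ⟨hz0, hz1⟩
    have h0 : (i + z : ℝ) ≠ 0 := by linarith
    have h1 : HasDerivAt (fun z : ℝ => (i : ℝ) + z) 1 z := (hasDerivAt_id z).const_add _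
    have h2 := (((hasDerivAt_const z (N : ℝ)).div h1 h0).const_sub 1).hasDerivWithinAt
      (s := Set.Ico 0 1)
    have e : (N : ℝ) / (i + z) ^ 2 = -((0 * ((i : ℝ) + z) - N * 1) / (i + z) ^ 2) := by
      ring
    rw [e]
    exact h2
  · rintro z ⟨hz0, hz1⟩ w ⟨hw0, hw1⟩ h
    have h0 : (i + z : ℝ) ≠ 0 := by linarith
    have h1 : (i + w : ℝ) ≠ 0 := by linarith
    have hNN : (N : ℝ) ≠ 0 := by linarith
    have h : (N : ℝ) / (i + z) = N / (i + w) := by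
      have h' : 1 - (N : ℝ) / (i + z) = 1 - N / (i + w) := h
      linarith
    rw [div_eq_div_iff h0 h1] at h
    have := mul_left_cancel₀ hNN h
    linarith

lemma rho_digit (N : ℕ) (hN : 2 ≤ N) (s : ℝ) (hs : s ∈ Set.Icc (0 : ℝ) 1) (i : ℤ)
    (hi : (N : ℤ) ≤ i) : rhoT N s (AA N ⁻¹' {i}) =
      ENNReal.ofReal ((s + (N : ℝ) - 1) / ((s + (i : ℝ)) * (s + (i : ℝ) - 1))) := by
  have hi' : (N : ℝ) ≤ i := by exact_mod_cast hi
  have := key N hN s hs i hi (fun _ => 1) measurable_const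
  simp only [lintegral_const, one_mul, Measure.restrict_apply_univ] at this
  rw [this, rho_univ N hN _ (Set.Ico_subset_Icc_self (s_mem N hN i hi' s hs)), mul_one]

lemma step (N : ℕ) (hN : 2 ≤ N) (s : ℝ) (hs : s ∈ Set.Icc (0 : ℝ) 1)
    (F : ℝ × ℝ → ENNReal) (hF : Measurable F) :
    ∫⁻ x, F (1 - N / (AA N x + s), RN N x) ∂(rhoT N s) =
      ∫⁻ x, (∫⁻ z, F (1 - N / (AA N x + s), z) ∂(rhoT N (1 - N / (AA N x + s)))) ∂(rhoT N s) := by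
  have hU : (⋃ i : ℤ, AA N ⁻¹' {i}) = Set.univ := by
    ext x; simp
  have hm : ∀ i : ℤ, MeasurableSet (AA N ⁻¹' {i}) :=
    fun i => AA_meas N (measurableSet_singleton i)
  have hd : Pairwise (Function.onFun Disjoint fun i : ℤ => AA N ⁻¹' {i}) := by
    intro i j hij
    exact Disjoint.preimage _ (by simpa using hij)
  rw [← setLIntegral_univ, ← hU, lintegral_iUnion hm hd, ← setLIntegral_univ (μ := rhoT N s), ← hU,
    lintegral_iUnion hm hd]
  congr 1
  ext i
  by_cases hi : (N : ℤ) ≤ i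
  · have e1 : ∫⁻ x in AA N ⁻¹' {i}, F (1 - N / (AA N x + s), RN N x) ∂(rhoT N s) =
        ∫⁻ x in AA N ⁻¹' {i}, F (1 - N / (i + s), RN N x) ∂(rhoT N s) := by
      refine setLIntegral_congr_fun (hm i) ?_
      rintro x rfl
      rfl
    have e2 : ∫⁻ x in AA N ⁻¹' {i}, (∫⁻ z, F (1 - N / (AA N x + s), z)
          ∂(rhoT N (1 - N / (AA N x + s)))) ∂(rhoT N s) =
        ∫⁻ x in AA N ⁻¹' {i}, (∫⁻ z, F (1 - N / (i + s), z)
          ∂(rhoT N (1 - N / (i + s)))) ∂(rhoT N s) := by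
      refine setLIntegral_congr_fun (hm i) ?_
      rintro x rfl
      rfl
    rw [e1, e2, key N hN s hs i hi (fun z => F (1 - N / (i + s), z)) (by fun_prop),
      lintegral_const, Measure.restrict_apply_univ, rho_digit N hN s hs i hi, mul_comm]
  · have : rhoT N s (AA N ⁻¹' {i}) = 0 := by
      refine measure_mono_null ?_ (rho_ae N s)
      intro x hx h
      have := AA_ge N x h
      rw [hx] at this
      exact hi this
    rw [setLIntegral_measure_zero _ _ this, setLIntegral_measure_zero _ _ this]

lemma RN_mem (N : ℕ) (x : ℝ) : RN N x ∈ Set.Ico (0 : ℝ) 1 := by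
  unfold RN
  split_ifs
  · simp
  · exact ⟨Int.fract_nonneg _, Int.fract_lt_one _⟩

lemma iter_mem (N k : ℕ) (x : ℝ) (hx : x ∈ Set.Ico (0 : ℝ) 1) :
    (RN N)^[k] x ∈ Set.Ico (0 : ℝ) 1 := by
  cases k with
  | zero => exact hx
  | succ k => rw [Function.iterate_succ_apply']; exact RN_mem N _

lemma digit_ge (N k : ℕ) (x : ℝ) (hx : x ∈ Set.Ico (0 : ℝ) 1) : (N : ℤ) ≤ digit N k x :=
  AA_ge N _ (iter_mem N k x hx)

lemma sVar_mem (N : ℕ) (hN : 2 ≤ N) (t : ℝ) (ht : t ∈ Set.Icc (0 : ℝ) 1) (y : ℝ)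
    (hy : y ∈ Set.Ico (0 : ℝ) 1) (k : ℕ) : sVar N t y k ∈ Set.Icc (0 : ℝ) 1 ∧
      (1 ≤ k → sVar N t y k < 1) := by
  induction k with
  | zero => exact ⟨ht, by simp⟩
  | succ k ih =>
    have := s_mem N hN (digit N k y) (by exact_mod_cast digit_ge N k y hy) _ ih.1
    exact ⟨Set.Ico_subset_Icc_self this, fun _ => this.2⟩

lemma digit_meas (N k : ℕ) : Measurable (digit N k) :=
  (AA_meas N).comp ((RN_meas N).iterate k)

lemma cast_meas : Measurable (fun z : ℤ => (z : ℝ)) := measurable_from_top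

lemma sVar_meas (N : ℕ) (t : ℝ) (k : ℕ) : Measurable (fun y => sVar N t y k) := by
  induction k with
  | zero => exact measurable_const
  | succ k ih =>
    have := cast_meas.comp (digit_meas N k)
    exact measurable_const.sub (measurable_const.div (this.add ih))

lemma int_meas (N : ℕ) (F : ℝ × ℝ → ENNReal) (hF : Measurable F) :
    Measurable (fun s => ∫⁻ z, F (s, z) ∂(rhoT N s)) := by
  have : (fun s => ∫⁻ z, F (s, z) ∂(rhoT N s)) =
      fun s => ∫⁻ z in Set.Ico (0:ℝ) 1, dd N s z * F (s, z) := by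
    ext s
    exact lint_rho N s _ (by fun_prop)
  rw [this]
  exact Measurable.lintegral_prod_right' (f := fun p : ℝ × ℝ => dd N p.1 p.2 * F p)
    ((dd_meas2 N).mul hF)

lemma claim (N : ℕ) (hN : 2 ≤ N) (t : ℝ) (ht : t ∈ Set.Icc (0 : ℝ) 1) (n : ℕ) :
    ∀ F : ℝ × ℝ → ENNReal, Measurable F →
    ∫⁻ y, F (sVar N t y n, (RN N)^[n] y) ∂(rhoT N t) =
      ∫⁻ y, (∫⁻ z, F (sVar N t y n, z) ∂(rhoT N (sVar N t y n))) ∂(rhoT N t) := by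
  induction n with
  | zero =>
    intro F hF
    simp only [sVar, Function.iterate_zero, id]
    rw [lintegral_const, rho_univ N hN t ht, mul_one]
  | succ n ih =>
    intro F hF
    have hA : Measurable fun p : ℝ × ℝ => 1 - (N : ℝ) / ((AA N p.2 : ℝ) + p.1) := by
      have : Measurable fun p : ℝ × ℝ => (AA N p.2 : ℝ) :=
        (cast_meas.comp (AA_meas N)).comp measurable_snd
      exact measurable_const.sub (measurable_const.div (this.add measurable_fst))
    have h1 := ih (fun p => F (1 - N / (AA N p.2 + p.1), RN N p.2))
      (hF.comp (hA.prodMk ((RN_meas N).comp measurable_snd)))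
    have h2 := ih (fun p => ∫⁻ z, F (1 - N / (AA N p.2 + p.1), z)
      ∂(rhoT N (1 - N / (AA N p.2 + p.1)))) ((int_meas N F hF).comp hA)
    have e1 : ∫⁻ y, F (sVar N t y (n + 1), (RN N)^[n + 1] y) ∂(rhoT N t) =
      ∫⁻ y, F (1 - N / (AA N ((RN N)^[n] y) + sVar N t y n), RN N ((RN N)^[n] y)) ∂(rhoT N t) := by
      simp only [Function.iterate_succ_apply']
      rfl
    rw [e1]
    refine h1.trans (Eq.trans ?_ h2.symm)
    refine lintegral_congr_ae ?_
    filter_upwards [rho_ae N t] with y hy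
    exact step N hN _ (sVar_mem N hN t ht y hy n).1 F hF

lemma P_nonneg (N : ℕ) (hN : 2 ≤ N) (i : ℤ) (hi : (N : ℤ) ≤ i) (s : ℝ) (hs : 0 ≤ s) :
    0 ≤ (s + (N : ℝ) - 1) / ((s + (i : ℝ)) * (s + (i : ℝ) - 1)) := by
  have hN' : (2 : ℝ) ≤ N := by exact_mod_cast hN
  have hi' : (N : ℝ) ≤ i := by exact_mod_cast hi
  exact div_nonneg (by linarith) (mul_nonneg (by linarith) (by linarith))

lemma part1 (N : ℕ) (hN : 2 ≤ N) (t : ℝ) (ht : t ∈ Set.Icc (0 : ℝ) 1)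
    (n : ℕ) (i : ℤ) (hi : (N : ℤ) ≤ i) (θ : ℝ) :
    (rhoT N t {y | digit N n y = i ∧ sVar N t y n < θ}).toReal
      = (∫ s in Set.Ico (0 : ℝ) θ, (s + (N : ℝ) - 1) / ((s + (i : ℝ)) * (s + (i : ℝ) - 1))
          ∂(Measure.map (fun y => sVar N t y n) (rhoT N t))) := by
  have hPm : Measurable fun s : ℝ => (s + (N : ℝ) - 1) / ((s + (i : ℝ)) * (s + (i : ℝ) - 1)) := by
    fun_prop
  rw [integral_eq_lintegral_of_nonneg_ae]
  rotate_left
  · filter_upwards [ae_restrict_mem measurableSet_Ico] with s hs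
    exact P_nonneg N hN i hi s hs.1
  · exact hPm.aestronglyMeasurable
  congr 1
  rw [setLIntegral_map measurableSet_Ico (by fun_prop) (sVar_meas N t n)]
  have hS : MeasurableSet {p : ℝ × ℝ | AA N p.2 = i ∧ p.1 < θ} :=
    ((AA_meas N).comp measurable_snd (measurableSet_singleton i)).inter
      (measurableSet_lt measurable_fst measurable_const)
  have h := claim N hN t ht n ({p : ℝ × ℝ | AA N p.2 = i ∧ p.1 < θ}.indicator 1)
    (measurable_one.indicator hS)
  have hS' : MeasurableSet {y | digit N n y = i ∧ sVar N t y n < θ} :=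
    (digit_meas N n (measurableSet_singleton i)).inter
      (measurableSet_lt (sVar_meas N t n) measurable_const)
  have e1 : rhoT N t {y | digit N n y = i ∧ sVar N t y n < θ} =
      ∫⁻ y, ({p : ℝ × ℝ | AA N p.2 = i ∧ p.1 < θ}.indicator 1)
        (sVar N t y n, (RN N)^[n] y) ∂(rhoT N t) := by
    rw [← lintegral_indicator_one hS']
    rfl
  rw [e1, h, ← lintegral_indicator (sVar_meas N t n measurableSet_Ico)]
  refine lintegral_congr_ae ?_
  filter_upwards [rho_ae N t] with y hy
  have hs := (sVar_mem N hN t ht y hy n).1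
  by_cases hlt : sVar N t y n < θ
  · rw [Set.indicator_of_mem (show y ∈ (fun y => sVar N t y n) ⁻¹' Set.Ico 0 θ from ⟨hs.1, hlt⟩), ← rho_digit N hN _ hs i hi,
      ← lintegral_indicator_one (AA_meas N (measurableSet_singleton i))]
    congr 1
    ext z
    by_cases hz : AA N z = i
    · rw [Set.indicator_of_mem (show z ∈ AA N ⁻¹' {i} from hz),
        Set.indicator_of_mem (show (sVar N t y n, z) ∈ {p : ℝ × ℝ | AA N p.2 = i ∧ p.1 < θ} from
          ⟨hz, hlt⟩)]
      rfl
    · rw [Set.indicator_of_notMem (show z ∉ AA N ⁻¹' {i} from hz),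
        Set.indicator_of_notMem (fun h : (sVar N t y n, z) ∈
          {p : ℝ × ℝ | AA N p.2 = i ∧ p.1 < θ} => hz h.1)]
  · rw [Set.indicator_of_notMem (fun h : y ∈ (fun y => sVar N t y n) ⁻¹' Set.Ico 0 θ => hlt h.2)]
    simp [Set.indicator_apply, hlt]

theorem stmt8 (N : ℕ) (hN : 2 ≤ N) (t : ℝ) (ht : t ∈ Set.Icc (0 : ℝ) 1)
    (n : ℕ) (hn : 1 ≤ n) (i : ℤ) (hi : (N : ℤ) ≤ i) (θ : ℝ) (hθ : θ ∈ Set.Ico (0 : ℝ) 1) :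
    (rhoT N t {y | digit N n y = i ∧ sVar N t y n < θ}).toReal
      = (∫ s in Set.Ico (0 : ℝ) θ, (s + (N : ℝ) - 1) / ((s + (i : ℝ)) * (s + (i : ℝ) - 1))
          ∂(Measure.map (fun y => sVar N t y n) (rhoT N t))) ∧
    Gt N t (n + 1) (1 - (N : ℝ) / ((i : ℝ) + θ)) - Gt N t (n + 1) (1 - (N : ℝ) / (i : ℝ))
      = ∫ s in Set.Ico (0 : ℝ) θ, (s + (N : ℝ) - 1) / ((s + (i : ℝ)) * (s + (i : ℝ) - 1))
          ∂(Measure.map (fun y => sVar N t y n) (rhoT N t)) := by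
  have hN' : (2 : ℝ) ≤ N := by exact_mod_cast hN
  have hi' : (N : ℝ) ≤ i := by exact_mod_cast hi
  have hp := part1 N hN t ht n i hi θ
  refine ⟨hp, ?_⟩
  rw [← hp]
  have hlt : ∀ y ∈ Set.Ico (0 : ℝ) 1, ∀ b : ℝ, (N : ℝ) ≤ b →
      (sVar N t y (n + 1) < 1 - N / b ↔ (digit N n y : ℝ) + sVar N t y n < b) := by
    intro y hy b hb
    have h1 : (N : ℝ) ≤ digit N n y := by exact_mod_cast digit_ge N n y hy
    have h2 := (sVar_mem N hN t ht y hy n).1.1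
    show 1 - (N : ℝ) / ((digit N n y : ℝ) + sVar N t y n) < _ ↔ _
    rw [sub_lt_sub_iff_left, div_lt_div_iff_of_pos_left] <;> linarith
  have hprob : IsProbabilityMeasure (rhoT N t) := ⟨rho_univ N hN t ht⟩
  have e1 : rhoT N t {y | sVar N t y (n + 1) < 1 - (N : ℝ) / (i : ℝ)} =
      rhoT N t {y | digit N n y < i} := by
    refine measure_congr ?_
    filter_upwards [rho_ae N t] with y hy
    have h3 := (sVar_mem N hN t ht y hy n).1.1
    have h4 := (sVar_mem N hN t ht y hy n).2 hn
    refine propext ((hlt y hy i hi').trans ?_)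
    show _ ↔ digit N n y < i
    constructor
    · intro h
      have : (digit N n y : ℝ) < i := by linarith
      exact_mod_cast this
    · intro h
      have : (digit N n y : ℝ) + 1 ≤ i := by exact_mod_cast h
      linarith
  have e2 : rhoT N t {y | sVar N t y (n + 1) < 1 - (N : ℝ) / ((i : ℝ) + θ)} =
      rhoT N t ({y | digit N n y < i} ∪ {y | digit N n y = i ∧ sVar N t y n < θ}) := by
    refine measure_congr ?_
    filter_upwards [rho_ae N t] with y hy
    have h3 := (sVar_mem N hN t ht y hy n).1.1
    have h4 := (sVar_mem N hN t ht y hy n).2 hn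
    refine propext ((hlt y hy (i + θ) (by linarith [hθ.1])).trans ?_)
    show _ ↔ (digit N n y < i ∨ (digit N n y = i ∧ sVar N t y n < θ))
    constructor
    · intro h
      rcases lt_trichotomy (digit N n y) i with h5 | h5 | h5
      · exact Or.inl h5
      · refine Or.inr ⟨h5, ?_⟩
        rw [h5] at h
        linarith
      · have : (i : ℝ) + 1 ≤ digit N n y := by exact_mod_cast h5
        linarith [hθ.2]
    · rintro (h | ⟨h, h'⟩)
      · have : (digit N n y : ℝ) + 1 ≤ i := by exact_mod_cast h
        linarith [hθ.1]
      · rw [h]; linarith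
  have hS' : MeasurableSet {y | digit N n y = i ∧ sVar N t y n < θ} :=
    (digit_meas N n (measurableSet_singleton i)).inter
      (measurableSet_lt (sVar_meas N t n) measurable_const)
  show (rhoT N t {y | sVar N t y (n + 1) < 1 - (N : ℝ) / ((i : ℝ) + θ)}).toReal -
    (rhoT N t {y | sVar N t y (n + 1) < 1 - (N : ℝ) / (i : ℝ)}).toReal = _
  rw [e1, e2, measure_union _ hS', ENNReal.toReal_add (measure_ne_top _ _) (measure_ne_top _ _)]
  · ring
  · rw [Set.disjoint_left]
    rintro y h1 ⟨h2, _⟩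
    exact absurd h2 (ne_of_lt h1)
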